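/- Let S be a finite regular semigroup and a, b ∈ S. Then a ∼ b if and only if a ≡ b. -/

import Mathlib

namespace SgConjPaper

/-- `spow x n = x^(n+1)`: positive powers of an element of a semigroup. -/
def spow {S : Type*} [Semigroup S] (x : S) : ℕ → S
  | 0 => x
  | n + 1 => spow x n * x

/-- `a` lies in the maximal subgroup of `S` whose identity is the idempotent
`e` (i.e. `e` is a two-sided identity for `a` and `a` is invertible over `e`). -/
def InMaxSubgroup {S : Type*} [Semigroup S] (e a : S) : Prop :=
  e * a = a ∧ a * e = a ∧ ∃ b : S, e * b = b ∧ b * e = b ∧ a * b = e ∧ b * a = e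

/-- `e` is the idempotent `e_x`: the identity of the maximal subgroup
containing some positive power of `x`. -/
def IsEIdem {S : Type*} [Semigroup S] (x e : S) : Prop :=
  ∃ k : ℕ, InMaxSubgroup e (spow x k)

/-- A semigroup is group-bound if some positive power of every element lies
in a subgroup. -/
def GroupBound (S : Type*) [Semigroup S] : Prop := ∀ x : S, ∃ e : S, IsEIdem x e

/-- Primary conjugacy: `x = uv`, `y = vu` for some `u, v ∈ S¹`. -/
def PrimConj {S : Type*} [Semigroup S] (x y : S) : Prop :=
  ∃ u v : WithOne S, (x : WithOne S) = u * v ∧ (y : WithOne S) = v * u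

/-- Conjugacy `∼`: the transitive closure of primary conjugacy. -/
def SgConj {S : Type*} [Semigroup S] : S → S → Prop := Relation.TransGen PrimConj

/-- Conjugacy in the character sense `≡`: equal traces under every
finite-dimensional complex representation. -/
def CharEq {S : Type*} [Semigroup S] (x y : S) : Prop :=
  ∀ (V : Type) (_ : AddCommGroup V) (_ : Module ℂ V) (_ : FiniteDimensional ℂ V)
    (φ : S →ₙ* Module.End ℂ V),
    LinearMap.trace ℂ V (φ x) = LinearMap.trace ℂ V (φ y)

/-- A semigroup is regular if for every `a` there is `b` with `a = aba`. -/
def Regular (S : Type*) [Semigroup S] : Prop := ∀ a : S, ∃ b : S, a * b * a = a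

section Helpers

variable {S : Type*} [Semigroup S]

lemma primConj_mul (u v : S) : PrimConj (u * v) (v * u) :=
  ⟨u, v, by simp, by simp⟩

lemma primConj_symm {x y : S} (h : PrimConj x y) : PrimConj y x := by
  obtain ⟨u, v, h1, h2⟩ := h
  exact ⟨v, u, h2, h1⟩

lemma sgConj_symm {x y : S} (h : SgConj x y) : SgConj y x := by
  unfold SgConj at *
  induction h with
  | single h => exact .single (primConj_symm h)
  | tail _ h ih => exact .head (primConj_symm h) ih

lemma sgConj_refl (x : S) : SgConj x x := .single ⟨1, x, by simp, by simp⟩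

lemma primConj_charEq {x y : S} (h : PrimConj x y) : CharEq x y := by
  intro V _ _ _ φ
  obtain ⟨u, v, h1, h2⟩ := h
  have e : ∀ s : S, φ s = WithOne.lift φ (s : WithOne S) := fun s => by simp
  rw [e, e, h1, h2, (WithOne.lift φ).map_mul, (WithOne.lift φ).map_mul]
  exact LinearMap.trace_mul_comm ℂ _ _

lemma sgConj_charEq {x y : S} (h : SgConj x y) : CharEq x y := by
  unfold SgConj at h
  induction h with
  | single h => exact primConj_charEq h
  | tail _ h ih =>
    intro V i1 i2 i3 φ
    exact (ih V i1 i2 i3 φ).trans (primConj_charEq h V i1 i2 i3 φ)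

/-- character equality applies to representations in every universe -/
lemma charEq_univ {x y : S} (h : CharEq x y) (V : Type*) [AddCommGroup V] [Module ℂ V]
    [FiniteDimensional ℂ V] (φ : S →ₙ* Module.End ℂ V) :
    LinearMap.trace ℂ V (φ x) = LinearMap.trace ℂ V (φ y) := by
  let E : V ≃ₗ[ℂ] (Fin (Module.finrank ℂ V) → ℂ) := (Module.finBasis ℂ V).equivFun
  let ψ : S →ₙ* Module.End ℂ (Fin (Module.finrank ℂ V) → ℂ) :=
    { toFun := fun s => E.conj (φ s)
      map_mul' := fun s t => by
        rw [map_mul]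
        exact LinearEquiv.conj_comp E _ _ }
  have := h _ inferInstance inferInstance inferInstance ψ
  simpa [ψ, LinearMap.trace_conj'] using this

/-- characters twisted by a commuting operator agree too -/
lemma charEq_twist {x y : S} (h : CharEq x y) (V : Type*) [AddCommGroup V] [Module ℂ V]
    [FiniteDimensional ℂ V] (φ : S →ₙ* Module.End ℂ V) (T : Module.End ℂ V)
    (hT : ∀ s, Commute T (φ s)) :
    LinearMap.trace ℂ V (φ x * T) = LinearMap.trace ℂ V (φ y * T) := by
  have hc : Commute T (φ x - φ y) := (hT x).sub_right (hT y)
  have key : LinearMap.trace ℂ V ((φ x - φ y) ∘ₗ T) = 0 := by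
    refine LinearMap.trace_comp_eq_zero_of_commute_of_trace_restrict_eq_zero hc
      (Module.End.iSup_maxGenEigenspace_eq_top T) ?_
    intro μ
    let ψ : S →ₙ* Module.End ℂ (T.maxGenEigenspace μ) :=
      { toFun := fun s => (φ s).restrict (Module.End.mapsTo_maxGenEigenspace_of_comm (hT s) μ)
        map_mul' := fun s t => by
          apply LinearMap.ext
          intro v
          apply Subtype.ext
          change (φ (s * t)) v.1 = φ s (φ t v.1)
          rw [map_mul]
          rfl }
    have h2 := charEq_univ h _ ψ
    have h3 : (φ x - φ y).restrict (Module.End.mapsTo_maxGenEigenspace_of_comm hc μ)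
        = ψ x - ψ y := by
      rfl
    rw [h3, map_sub, h2, sub_self]
  have : (φ x - φ y) ∘ₗ T = φ x * T - φ y * T := sub_mul _ _ _
  rw [this, map_sub, sub_eq_zero] at key
  exact key

/-- the `L`-class of `e` -/
abbrev LCl (e : S) : Type _ := {x : S // x * e = x ∧ ∃ y, y * x = e}

open Classical in
/-- matrix of left multiplication by `s` on the `L`-class -/
noncomputable def Lmat (e s : S) : Matrix (LCl e) (LCl e) ℂ :=
  fun y x => if s * x.1 = y.1 then 1 else 0

open Classical in
/-- matrix of right multiplication -/
noncomputable def Rmat (e h : S) : Matrix (LCl e) (LCl e) ℂ :=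
  fun y x => if x.1 * h = y.1 then 1 else 0

open Classical in
lemma sum_aux {e : S} [Fintype (LCl e)] (w : S) (P : S → Prop)
    (hP : P w → ∃ z : LCl e, z.1 = w) :
    (∑ z : LCl e, (if P z.1 then (1:ℂ) else 0) * (if w = z.1 then 1 else 0)) =
      if P w then 1 else 0 := by
  by_cases h : P w
  · obtain ⟨z, rfl⟩ := hP h
    rw [Finset.sum_eq_single z]
    · simp
    · intro b _ hb
      have : z.1 ≠ b.1 := fun h => hb (Subtype.ext h.symm)
      simp [this]
    · simp
  · rw [if_neg h]
    apply Finset.sum_eq_zero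
    intro z _
    by_cases hz : w = z.1
    · rw [← hz]; simp [h]
    · simp [hz]

lemma Lmat_mul {e : S} [Fintype (LCl e)] (s t : S) :
    Lmat e (s * t) = Lmat e s * Lmat e t := by
  classical
  ext y x
  rw [Matrix.mul_apply]
  unfold Lmat
  have := sum_aux (e := e) (t * x.1) (fun z => s * z = y.1) (by
    intro h
    obtain ⟨hy, w, hw⟩ := y.2
    refine ⟨⟨t * x.1, by rw [mul_assoc, x.2.1], w * s, by rw [mul_assoc, h, hw]⟩, rfl⟩)
  rw [mul_assoc]
  convert this.symm

lemma comm_aux {e h h' : S} [Fintype (LCl e)] (h1 : e * h = h) (h2 : h * e = h)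
    (h4 : h' * h = e) (s : S) :
    Lmat e s * Rmat e h = fun y x => (open Classical in if s * x.1 * h = y.1 then 1 else 0) := by
  classical
  ext y x
  rw [Matrix.mul_apply]
  unfold Lmat Rmat
  have := sum_aux (e := e) (x.1 * h) (fun z => s * z = y.1) (by
    intro _
    obtain ⟨hx, w, hw⟩ := x.2
    refine ⟨⟨x.1 * h, by rw [mul_assoc, h2], h' * w, by
      rw [mul_assoc, ← mul_assoc w, hw, h1, h4]⟩, rfl⟩)
  rw [mul_assoc]
  convert this

lemma comm_aux' {e h h' : S} [Fintype (LCl e)]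
    (h3 : h * h' = e) (h6 : e * h' = h') (s : S) :
    Rmat e h * Lmat e s = fun y x => (open Classical in if s * x.1 * h = y.1 then 1 else 0) := by
  classical
  ext y x
  rw [Matrix.mul_apply]
  unfold Lmat Rmat
  have := sum_aux (e := e) (s * x.1) (fun z => z * h = y.1) (by
    intro hh
    obtain ⟨hy, w, hw⟩ := y.2
    refine ⟨⟨s * x.1, by rw [mul_assoc, x.2.1], h * w, ?_⟩, rfl⟩
    have h5 : w * (s * x.1) = h' := by
      have : w * (s * x.1 * h) * h' = e * h' := by rw [hh, hw]
      rw [h6] at this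
      rw [← this, mul_assoc w, mul_assoc (s * x.1), h3, mul_assoc s, x.2.1]
    rw [mul_assoc, h5, h3])
  convert this

/-- the key combinatorial consequence -/
lemma key_count [Finite S] {a b e h : S} (hab : CharEq a b) (he : e * e = e)
    (hb1 : e * b = b) (hb2 : b * e = b)
    (h1 : e * h = h) (h2 : h * e = h) (h3 : b * h = e) (h4 : h * b = e) :
    ∃ x y : S, x * e = x ∧ y * x = e ∧ a * x = x * b := by
  classical
  have := Fintype.ofFinite (LCl e)
  let φ : S →ₙ* Module.End ℂ (LCl e → ℂ) :=
    { toFun := fun s => Matrix.toLin' (Lmat e s)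
      map_mul' := fun s t => by rw [Lmat_mul, Matrix.toLin'_mul]; rfl }
  have hL := fun s => comm_aux (e := e) h1 h2 h3 s
  have hR := fun s => comm_aux' (e := e) h4 hb1 s
  have ht := charEq_twist hab _ φ (Matrix.toLin' (Rmat e h)) (fun s => by
    change Matrix.toLin' (Rmat e h) ∘ₗ Matrix.toLin' (Lmat e s) =
      Matrix.toLin' (Lmat e s) ∘ₗ Matrix.toLin' (Rmat e h)
    rw [← Matrix.toLin'_mul, ← Matrix.toLin'_mul, hL, hR])
  have tr : ∀ s, LinearMap.trace ℂ _ (φ s * Matrix.toLin' (Rmat e h)) =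
      ((Finset.univ.filter (fun x : LCl e => s * x.1 * h = x.1)).card : ℂ) := by
    intro s
    change LinearMap.trace ℂ _ (Matrix.toLin' (Lmat e s) ∘ₗ Matrix.toLin' (Rmat e h)) = _
    rw [← Matrix.toLin'_mul, Matrix.trace_toLin'_eq, hL]
    change (∑ x : LCl e, if s * x.1 * h = x.1 then (1 : ℂ) else 0) = _
    rw [Finset.sum_boole]
  rw [tr, tr] at ht
  have ht := Nat.cast_injective ht
  have hpos : 0 < (Finset.univ.filter (fun x : LCl e => b * x.1 * h = x.1)).card :=
    Finset.card_pos.2 ⟨⟨e, he, e, he⟩, by simp [hb2, h3]⟩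
  rw [← ht] at hpos
  obtain ⟨x, hx⟩ := Finset.card_pos.1 hpos
  obtain ⟨hxe, y, hy⟩ := x.2
  simp only [Finset.mem_filter, Finset.mem_univ, true_and] at hx
  refine ⟨x.1, y, hxe, hy, ?_⟩
  conv_rhs => rw [← hx, mul_assoc, h4, mul_assoc, hxe]

/-- stability -/
lemma stab [Finite S] {f x p q : S} (hx : f * x = x) (hf : f * f = f) (h : p * x * q = f) :
    ∃ z, x * z = f := by
  have hsub : Set.range (x * ·) ⊆ Set.range (f * ·) := by
    rintro _ ⟨s, rfl⟩
    exact ⟨x * s, by simp [← mul_assoc, hx]⟩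
  have hsup : Set.range (f * ·) ⊆ (p * ·) '' Set.range (x * ·) := by
    rintro _ ⟨s, rfl⟩
    exact ⟨x * (q * s), ⟨_, rfl⟩, by simp [← mul_assoc, h]⟩
  have heq := Set.eq_of_subset_of_ncard_le hsub
    ((Set.ncard_le_ncard hsup).trans (Set.ncard_image_le (Set.toFinite _))) (Set.toFinite _)
  have : f ∈ Set.range (f * ·) := ⟨f, hf⟩
  rw [← heq] at this
  exact this

lemma group_case [Finite S] {a b e f : S} (ha : InMaxSubgroup f a) (hb : InMaxSubgroup e b)
    (hab : CharEq a b) : SgConj a b := by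
  obtain ⟨fa, af, a', fa', a'f, aa, aa'⟩ := ha
  obtain ⟨eb, be, b', eb', b'e, bb, bb'⟩ := hb
  have he : e * e = e := by
    have : e * (b * b') = b * b' := by rw [← mul_assoc, eb]
    rwa [bb] at this
  have hf : f * f = f := by
    have : f * (a * a') = a * a' := by rw [← mul_assoc, fa]
    rwa [aa] at this
  have hba : CharEq b a := fun V i1 i2 i3 φ => (hab V i1 i2 i3 φ).symm
  obtain ⟨x, y, xe, yx, hx⟩ := key_count hab he eb be eb' b'e bb bb'
  obtain ⟨x', y', xf', yx', hx'⟩ := key_count hba hf fa af fa' a'f aa aa'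
  have fx : f * x = x := by
    have : x = a * x * b' := by rw [hx, mul_assoc, bb, xe]
    rw [this, ← mul_assoc, ← mul_assoc, fa]
  have ex' : e * x' = x' := by
    have : x' = b * x' * a' := by rw [hx', mul_assoc, aa, xf']
    rw [this, ← mul_assoc, ← mul_assoc, eb]
  obtain ⟨z, hz⟩ := stab (p := y' * y) (q := x') fx hf (by
    rw [mul_assoc y', yx, mul_assoc, ex', yx'])
  have h1 : (y * f) * x = e := by rw [mul_assoc, fx, yx]
  have h2 : x * (y * f) = f := by
    rw [← hz, ← mul_assoc y, yx, ← mul_assoc, xe]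
  have hb' : b = (y * f * a) * x := by
    rw [mul_assoc, hx, ← mul_assoc, h1, eb]
  have ha' : a = x * (y * f * a) := by
    rw [← mul_assoc, h2, fa]
  have := primConj_mul x (y * f * a)
  rw [← ha', ← hb'] at this
  exact .single this

lemma spow_succ' (x : S) (n : ℕ) : spow x (n + 1) = x * spow x n := by
  induction n with
  | zero => rfl
  | succ n ih =>
    change spow x (n + 1) * x = x * (spow x n * x)
    rw [ih, mul_assoc]

lemma spow_add (x : S) (m n : ℕ) : spow x m * spow x n = spow x (m + n + 1) := by
  induction n with
  | zero => rfl
  | succ n ih =>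
    change spow x m * (spow x n * x) = spow x (m + n + 1) * x
    rw [← ih, mul_assoc]

lemma group_of_period (x : S) (d : ℕ) (h : spow x (d + 1) = x) : ∃ e, InMaxSubgroup e x := by
  have h2 : spow x (d + 1 + d + 1) = x := by
    rw [← spow_add, h, ← spow_succ', h]
  have h3 : spow x (2 * d + 2) = x := by convert h2 using 2; omega
  refine ⟨spow x (2 * d + 1), ?_, ?_, spow x (2 * d), ?_, ?_, ?_, ?_⟩
  · exact h3
  · rw [← spow_succ']; exact h3
  · cases d with
    | zero => change spow x 1 * x = x; exact h3
    | succ d =>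
      rw [show 2 * (d + 1) = 2 * d + 1 + 1 by ring, spow_succ' x (2 * d + 1), ← mul_assoc]
      congr 1
  · cases d with
    | zero => change x * spow x 1 = x; rw [← spow_succ']; exact h3
    | succ d =>
      change (spow x (2 * d + 1) * x) * _ = _
      rw [mul_assoc, ← spow_succ']
      exact congrArg (spow x (2 * d + 1) * ·) h3
  · rw [← spow_succ']
  · rfl

lemma group_of_eq [Finite S] (x : S) (hreg : Regular S)
    (h : Set.range (x * ·) ⊆ Set.range ((x * x) * ·)) : ∃ e, InMaxSubgroup e x := by
  have hsurj : (x * ·) '' Set.range (x * ·) = Set.range (x * ·) := by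
    apply Set.Subset.antisymm
    · rintro _ ⟨_, ⟨s, rfl⟩, rfl⟩
      exact ⟨x * s, rfl⟩
    · intro z hz
      obtain ⟨s, rfl⟩ := h hz
      exact ⟨x * s, ⟨s, rfl⟩, by simp [mul_assoc]⟩
  have hinj : Set.InjOn (x * ·) (Set.range (x * ·)) :=
    Set.injOn_of_ncard_image_eq (by rw [hsurj]) (Set.toFinite _)
  have hmem : ∀ n, spow x n ∈ Set.range (x * ·) := by
    intro n
    cases n with
    | zero =>
      obtain ⟨y, hy⟩ := hreg x
      exact ⟨y * x, by simpa [mul_assoc, spow] using hy⟩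
    | succ n => exact ⟨_, (spow_succ' x n).symm⟩
  have hcancel : ∀ i d, spow x i = spow x (i + d) → x = spow x d := by
    intro i
    induction i with
    | zero => intro d hd; rw [zero_add] at hd; exact hd
    | succ i ih =>
      intro d hd
      apply ih
      apply hinj (hmem _) (hmem _)
      change x * _ = x * _
      rw [← spow_succ', ← spow_succ', hd]
      congr 1
      omega
  obtain ⟨i, j, hij, hne⟩ := Finite.exists_ne_map_eq_of_infinite (spow x)
  rcases lt_or_gt_of_ne hij with hlt | hlt
  · obtain ⟨d, rfl⟩ := Nat.exists_eq_add_of_lt hlt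
    exact group_of_period x d (hcancel i (d + 1) hne).symm
  · obtain ⟨d, rfl⟩ := Nat.exists_eq_add_of_lt hlt
    exact group_of_period x d (hcancel j (d + 1) hne.symm).symm

lemma exists_group [Finite S] (hreg : Regular S) (x : S) :
    ∃ g e, SgConj x g ∧ InMaxSubgroup e g := by
  induction hn : (Set.range (x * ·)).ncard using Nat.strong_induction_on generalizing x with
  | _ n ih =>
    by_cases h : Set.range (x * ·) ⊆ Set.range ((x * x) * ·)
    · obtain ⟨e, he⟩ := group_of_eq x hreg h
      exact ⟨x, e, sgConj_refl x, he⟩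
    · obtain ⟨x', hx'⟩ := hreg x
      have hss : Set.range ((x * (x * x')) * ·) ⊂ Set.range (x * ·) := by
        refine ⟨?_, fun hc => h (hc.trans ?_)⟩
        · rintro _ ⟨s, rfl⟩
          exact ⟨x * x' * s, by simp [mul_assoc]⟩
        · rintro _ ⟨s, rfl⟩
          exact ⟨x' * s, by simp [mul_assoc]⟩
      obtain ⟨g, e, hg, he⟩ := ih _ (hn ▸ Set.ncard_lt_ncard hss (Set.toFinite _)) _ rfl
      refine ⟨g, e, .head ?_ hg, he⟩
      have := primConj_mul (x * x') x
      rwa [hx'] at this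

end Helpers

/-- Corollary 1 (statement 3): in a finite regular semigroup, `a ∼ b` iff
`a ≡ b`. -/
theorem conj_iff_charEq_of_finite_regular {S : Type*} [Semigroup S] [Finite S]
    (hreg : Regular S) (a b : S) : SgConj a b ↔ CharEq a b := by
  refine ⟨sgConj_charEq, fun h => ?_⟩
  obtain ⟨g, f, hag, hg⟩ := exists_group hreg a
  obtain ⟨k, e, hbk, hk⟩ := exists_group hreg b
  have hgk : CharEq g k := fun V i1 i2 i3 φ =>
    ((sgConj_charEq hag V i1 i2 i3 φ).symm.trans (h V i1 i2 i3 φ)).trans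
      (sgConj_charEq hbk V i1 i2 i3 φ)
  exact (hag.trans (group_case hg hk hgk)).trans (sgConj_symm hbk)

end SgConjPaper
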